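/- There exists a constant C > 0, depending only on n, such that for every λ > 0 and every smooth ℤⁿ-periodic φ : ℝⁿ → ℝ with Δφ = −λ²φ and ∫_Q φ(x)² dx = 1, one has ∫_Q |φ(x)| dx ≥ C λ^{−(n−1)/4}. -/

import Mathlib

/-!
Since `1 = ∫_Q φ² ≤ ‖φ‖_∞ ‖φ‖_1`, the bound follows from `‖φ‖_∞ ≤ C λ^((n-1)/2) ‖φ‖_1`.

Integration by parts over the cube shows that `φ` is a trigonometric polynomial all of whose
frequencies have length `λ / 2π`; in particular `λ ≥ 1` unless `φ = 0`. Convolution with the Poisson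
kernel `c t (t² + |y|²)^(-(n+1)/2)` at a complex time `t` therefore multiplies `φ` by `exp (-t λ)`,
a factor of modulus `1/e` at the times `t = 1/λ + iτ`, whatever the real number `τ`. With `ε = 1/λ`
and `τ` between `1` and `2`, the kernel is as large as `ε^(-(n+1)/2)`, but only near the sphere
`|y| = τ`, because `t² + |y|² = (t + i|y|) (t - i|y|)`. Its modulus averaged over `τ ∈ [1, 2]` is
thus smaller by a full factor `ε`: it is at most `C ε^(-(n-1)/2) (1 + |y|)^(-(n+1))`. This weight is
integrable, and integrating the periodic function `|φ|` against it costs a constant times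
`∫_Q |φ|`.
-/

open MeasureTheory Real Set

noncomputable section

/-- The Euclidean Laplacian `Δφ = Σᵢ ∂²φ/∂xᵢ²`. -/
def lap {n : ℕ} (φ : EuclideanSpace ℝ (Fin n) → ℝ) (x : EuclideanSpace ℝ (Fin n)) : ℝ :=
  ∑ i : Fin n,
    fderiv ℝ (fun y => fderiv ℝ φ y (EuclideanSpace.single i 1)) x (EuclideanSpace.single i 1)

/-- `ℤⁿ`-periodicity of a function on `ℝⁿ`. -/
def ZPeriodic {n : ℕ} (φ : EuclideanSpace ℝ (Fin n) → ℝ) : Prop :=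
  ∀ (x : EuclideanSpace ℝ (Fin n)) (k : Fin n → ℤ),
    φ (x + (WithLp.equiv 2 (Fin n → ℝ)).symm fun i => (k i : ℝ)) = φ x

/-- The fundamental domain `Q = [0,1)ⁿ`. -/
def Qcube (n : ℕ) : Set (EuclideanSpace ℝ (Fin n)) :=
  {x | ∀ i, x i ∈ Set.Ico (0 : ℝ) 1}

/-! ### Gaussian integrals with complex parameter -/

lemma mul_cpow_of_re_pos {z w : ℂ} (hz : 0 < z.re) (hw : 0 < w.re) (c : ℂ) :
    (z * w) ^ c = z ^ c * w ^ c := by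
  have hz0 : z ≠ 0 := by rintro rfl; simp at hz
  have hw0 : w ≠ 0 := by rintro rfl; simp at hw
  have harg : z.arg + w.arg ∈ Ioc (-π) π := by
    have hz' := abs_lt.mp (Complex.abs_arg_lt_pi_div_two_iff.mpr (Or.inl hz))
    have hw' := abs_lt.mp (Complex.abs_arg_lt_pi_div_two_iff.mpr (Or.inl hw))
    constructor <;> linarith
  rw [Complex.cpow_def_of_ne_zero (mul_ne_zero hz0 hw0), Complex.cpow_def_of_ne_zero hz0,
    Complex.cpow_def_of_ne_zero hw0, Complex.log_mul hz0 hw0 harg, add_mul, Complex.exp_add]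

lemma inv_re_pos {z : ℂ} (hz : 0 < z.re) : 0 < (z⁻¹).re := by
  have hz0 : z ≠ 0 := by rintro rfl; simp at hz
  rw [Complex.inv_re]
  exact div_pos hz (Complex.normSq_pos.mpr hz0)

section CauchySchlomilch

variable {b : ℝ}

lemma injOn_sub_div (hb : 0 < b) : InjOn (fun v : ℝ => v - b / v) (Ioi 0) :=
  StrictMonoOn.injOn fun v hv w _ hvw => by
    linarith [div_lt_div_of_pos_left hb hv hvw]

lemma image_sub_div_Ioi (hb : 0 < b) : (fun v : ℝ => v - b / v) '' Ioi 0 = univ := by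
  refine eq_univ_of_forall fun w => ?_
  have habs : |w| < √(w ^ 2 + 4 * b) := by
    rw [← Real.sqrt_sq_eq_abs]
    exact Real.sqrt_lt_sqrt (sq_nonneg _) (by linarith)
  have hpos : 0 < (w + √(w ^ 2 + 4 * b)) / 2 := by linarith [neg_abs_le w]
  refine ⟨(w + √(w ^ 2 + 4 * b)) / 2, hpos, ?_⟩
  have hsq : √(w ^ 2 + 4 * b) ^ 2 = w ^ 2 + 4 * b := Real.sq_sqrt (by positivity)
  simp only
  rw [sub_eq_iff_eq_add, ← sub_eq_iff_eq_add', eq_div_iff hpos.ne']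
  linarith

lemma injOn_div (hb : 0 < b) : InjOn (fun v : ℝ => b / v) (Ioi 0) :=
  StrictAntiOn.injOn fun _ hv _ _ hvw => div_lt_div_of_pos_left hb hv hvw

lemma image_div_Ioi (hb : 0 < b) : (fun v : ℝ => b / v) '' Ioi 0 = Ioi 0 := by
  ext v
  refine ⟨?_, fun hv => ⟨b / v, div_pos hb hv, div_div_cancel₀ hb.ne'⟩⟩
  rintro ⟨w, hw, rfl⟩
  exact div_pos hb hw

lemma hasDerivWithinAt_div (b : ℝ) {v : ℝ} (hv : v ∈ Ioi (0 : ℝ)) :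
    HasDerivWithinAt (fun v : ℝ => b / v) (-(b / v ^ 2)) (Ioi 0) v := by
  simpa [div_eq_mul_inv] using ((hasDerivAt_inv (ne_of_gt hv)).const_mul b).hasDerivWithinAt

lemma hasDerivWithinAt_sub_div (b : ℝ) {v : ℝ} (hv : v ∈ Ioi (0 : ℝ)) :
    HasDerivWithinAt (fun v : ℝ => v - b / v) (1 + b / v ^ 2) (Ioi 0) v :=
  ((hasDerivWithinAt_id v _).sub (hasDerivWithinAt_div b hv)).congr_deriv (sub_neg_eq_add _ _)

variable {E : Type*} [NormedAddCommGroup E] [NormedSpace ℝ E] {f : ℝ → E}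

lemma integrableOn_deriv_smul_comp_sub_div (hb : 0 < b) (hf : Integrable f) :
    IntegrableOn (fun v : ℝ => (1 + b / v ^ 2) • f (v - b / v)) (Ioi 0) := by
  have h := (integrableOn_image_iff_integrableOn_abs_deriv_smul measurableSet_Ioi
    (fun v hv => hasDerivWithinAt_sub_div b hv) (injOn_sub_div hb) f).mp
    (by rwa [image_sub_div_Ioi hb, integrableOn_univ])
  refine h.congr_fun (fun v _ => ?_) measurableSet_Ioi
  beta_reduce
  rw [abs_of_pos (by positivity)]

lemma integral_deriv_smul_comp_sub_div (hb : 0 < b) (f : ℝ → E) :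
    ∫ v in Ioi (0 : ℝ), (1 + b / v ^ 2) • f (v - b / v) = ∫ w, f w := by
  have h := integral_image_eq_integral_abs_deriv_smul measurableSet_Ioi
    (fun v hv => hasDerivWithinAt_sub_div b hv) (injOn_sub_div hb) f
  rw [image_sub_div_Ioi hb, setIntegral_univ] at h
  rw [h]
  refine setIntegral_congr_fun measurableSet_Ioi fun v _ => ?_
  rw [abs_of_pos (by positivity)]

lemma integrableOn_comp_sub_div (hb : 0 < b) (hf : Integrable f) :
    IntegrableOn (fun v : ℝ => f (v - b / v)) (Ioi 0) := by
  have h : IntegrableOn (fun v : ℝ => (1 + b / v ^ 2)⁻¹ • (1 + b / v ^ 2) • f (v - b / v))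
      (Ioi 0) := by
    refine (integrableOn_deriv_smul_comp_sub_div hb hf).bdd_smul 1
      (Measurable.aestronglyMeasurable (by fun_prop)) (.of_forall fun v => ?_)
    rw [norm_inv, Real.norm_of_nonneg (by positivity)]
    exact inv_le_one_of_one_le₀ (le_add_of_nonneg_right (by positivity))
  refine h.congr_fun (fun v _ => ?_) measurableSet_Ioi
  exact inv_smul_smul₀ (by positivity) _

/-- The substitution `v ↦ b / v` exchanges `v - b / v` with its negative. -/
lemma integral_div_sq_smul_comp_sub_div (hb : 0 < b) (hf : ∀ x, f (-x) = f x) :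
    ∫ v in Ioi (0 : ℝ), (b / v ^ 2) • f (v - b / v) = ∫ v in Ioi (0 : ℝ), f (v - b / v) := by
  have h := integral_image_eq_integral_abs_deriv_smul measurableSet_Ioi
    (fun v hv => hasDerivWithinAt_div b hv) (injOn_div hb) fun v => f (v - b / v)
  rw [image_div_Ioi hb] at h
  rw [h]
  refine setIntegral_congr_fun measurableSet_Ioi fun v _ => ?_
  rw [abs_neg, abs_of_nonneg (by positivity), div_div_cancel₀ hb.ne', ← hf, neg_sub]

lemma integral_comp_sub_div (hb : 0 < b) (hf : Integrable f) (heven : ∀ x, f (-x) = f x) :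
    ∫ v in Ioi (0 : ℝ), f (v - b / v) = (1 / 2 : ℝ) • ∫ w, f w := by
  have hsum : ∫ w, f w = (2 : ℝ) • ∫ v in Ioi (0 : ℝ), f (v - b / v) := by
    have hint := integrableOn_comp_sub_div hb hf
    have hint' : IntegrableOn (fun v : ℝ => (b / v ^ 2) • f (v - b / v)) (Ioi 0) := by
      refine ((integrableOn_deriv_smul_comp_sub_div hb hf).sub hint).congr_fun
        (fun v _ => ?_) measurableSet_Ioi
      simp [add_smul]
    calc ∫ w, f w = ∫ v in Ioi (0 : ℝ), (1 + b / v ^ 2) • f (v - b / v) :=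
          (integral_deriv_smul_comp_sub_div hb f).symm
      _ = (∫ v in Ioi (0 : ℝ), f (v - b / v)) +
          ∫ v in Ioi (0 : ℝ), (b / v ^ 2) • f (v - b / v) := by
        simp only [add_smul, one_smul]
        exact integral_add hint hint'
      _ = (2 : ℝ) • ∫ v in Ioi (0 : ℝ), f (v - b / v) := by
        rw [integral_div_sq_smul_comp_sub_div hb heven, two_smul]
  rw [hsum, smul_smul]
  norm_num

end CauchySchlomilch

lemma integral_cexp_neg_mul_sq_add_div_sq {b : ℝ} (hb : 0 ≤ b) {t : ℂ} (ht : 0 < t.re) :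
    ∫ v in Ioi (0 : ℝ), Complex.exp (-t * ((v : ℂ) ^ 2 + (b : ℂ) ^ 2 / (v : ℂ) ^ 2)) =
      (π / t) ^ (1 / 2 : ℂ) / 2 * Complex.exp (-2 * t * b) := by
  obtain rfl | hb := hb.eq_or_lt
  · simpa using integral_gaussian_complex_Ioi ht
  have h := integral_comp_sub_div hb (integrable_cexp_neg_mul_sq ht) (by intro x; simp)
  rw [integral_gaussian_complex ht, Complex.real_smul] at h
  have hhalf : (π / t) ^ (1 / 2 : ℂ) / 2 = ((1 / 2 : ℝ) : ℂ) * (π / t) ^ (1 / 2 : ℂ) := by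
    push_cast
    ring
  rw [hhalf, ← h, ← integral_mul_const]
  refine setIntegral_congr_fun measurableSet_Ioi fun v hv => ?_
  have hv' : (v : ℂ) ≠ 0 := by exact_mod_cast (ne_of_gt hv)
  rw [← Complex.exp_add]
  congr 1
  push_cast
  field_simp
  ring

lemma integrableOn_pow_mul_cexp_neg_mul_sq {z : ℂ} (hz : 0 < z.re) (m : ℕ) :
    IntegrableOn (fun v : ℝ => (v : ℂ) ^ m * Complex.exp (-z * (v : ℂ) ^ 2)) (Ioi 0) := by
  refine Integrable.mono' (integrableOn_rpow_mul_exp_neg_mul_sq hz (s := m)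
    (neg_one_lt_zero.trans_le m.cast_nonneg)) (Measurable.aestronglyMeasurable (by fun_prop))
    ((ae_restrict_iff' measurableSet_Ioi).mpr (.of_forall fun v hv => ?_))
  rw [norm_mul, norm_cexp_neg_mul_sq, norm_pow, Complex.norm_real,
    Real.norm_of_nonneg (le_of_lt hv), Real.rpow_natCast]

lemma integral_pow_add_two_mul_cexp_neg_mul_sq {z : ℂ} (hz : 0 < z.re) (m : ℕ) :
    2 * z * ∫ v in Ioi (0 : ℝ), (v : ℂ) ^ (m + 2) * Complex.exp (-z * (v : ℂ) ^ 2) =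
      (m + 1) * ∫ v in Ioi (0 : ℝ), (v : ℂ) ^ m * Complex.exp (-z * (v : ℂ) ^ 2) := by
  have hderiv : ∀ v : ℝ, HasDerivAt
      (fun v : ℝ => (v : ℂ) ^ (m + 1) * Complex.exp (-z * (v : ℂ) ^ 2))
      ((m + 1) * ((v : ℂ) ^ m * Complex.exp (-z * (v : ℂ) ^ 2)) -
        2 * z * ((v : ℂ) ^ (m + 2) * Complex.exp (-z * (v : ℂ) ^ 2))) v := by
    intro v
    refine HasDerivAt.comp_ofReal
      (e := fun w : ℂ => w ^ (m + 1) * Complex.exp (-z * w ^ 2)) ?_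
    refine ((hasDerivAt_pow (m + 1) (v : ℂ)).mul
      (((hasDerivAt_pow 2 (v : ℂ)).const_mul (-z)).cexp)).congr_deriv ?_
    push_cast
    simp only [pow_one]
    ring
  have hint := (integrableOn_pow_mul_cexp_neg_mul_sq hz m).const_mul ((m : ℂ) + 1)
  have hint' := (integrableOn_pow_mul_cexp_neg_mul_sq hz (m + 2)).const_mul (2 * z)
  have hlim := tendsto_zero_of_hasDerivAt_of_integrableOn_Ioi (a := 0) (fun v _ => hderiv v)
    (hint.sub hint') (integrableOn_pow_mul_cexp_neg_mul_sq hz (m + 1))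
  have hparts := integral_Ioi_of_hasDerivAt_of_tendsto' (fun v _ => hderiv v) (hint.sub hint') hlim
  rw [integral_sub hint hint', integral_const_mul, integral_const_mul, Complex.ofReal_zero,
    zero_pow m.succ_ne_zero, zero_mul, sub_zero] at hparts
  exact (sub_eq_zero.mp hparts).symm

lemma integral_pow_mul_cexp_neg_mul_sq {z : ℂ} (hz : 0 < z.re) (m : ℕ) :
    ∫ v in Ioi (0 : ℝ), (v : ℂ) ^ m * Complex.exp (-z * (v : ℂ) ^ 2) =
      Complex.Gamma ((m + 1) / 2) / 2 * z ^ (-((m + 1) / 2) : ℂ) := by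
  have hz0 : z ≠ 0 := by rintro rfl; simp at hz
  induction m using Nat.twoStepInduction with
  | zero =>
    have hpi : 0 < (π : ℂ).re := by simpa using pi_pos
    have harg : z.arg ≠ π := fun h => by
      have := (Complex.arg_eq_pi_iff.mp h).1
      linarith
    simp only [pow_zero, one_mul, Nat.cast_zero, zero_add, Complex.Gamma_one_half_eq]
    rw [integral_gaussian_complex_Ioi hz, div_eq_mul_inv (π : ℂ), Complex.cpow_neg,
      mul_cpow_of_re_pos hpi (inv_re_pos hz), Complex.inv_cpow _ _ harg]
    ring
  | one =>
    simp only [pow_one, Nat.cast_one, one_add_one_eq_two]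
    rw [integral_mul_cexp_neg_mul_sq hz, div_self two_ne_zero, Complex.Gamma_one,
      Complex.cpow_neg_one, mul_inv, one_div]
  | more m ih _ =>
    have hm : ((m : ℂ) + 1) / 2 ≠ 0 := div_ne_zero (Nat.cast_add_one_ne_zero m) two_ne_zero
    have hexp : (((m + 2 : ℕ) : ℂ) + 1) / 2 = (m + 1) / 2 + 1 := by
      push_cast
      ring
    refine mul_left_cancel₀ (mul_ne_zero two_ne_zero hz0)
      ((integral_pow_add_two_mul_cexp_neg_mul_sq hz m).trans ?_)
    rw [ih, hexp, Complex.Gamma_add_one _ hm, neg_add, ← sub_eq_add_neg, Complex.cpow_sub _ _ hz0,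
      Complex.cpow_one]
    field_simp

/-! ### The Poisson kernel at complex time -/

section PoissonKernel

open Module
open scoped FourierTransform

variable {V : Type*} [NormedAddCommGroup V] [InnerProductSpace ℝ V]

/-- The Poisson kernel `Γ((d+1)/2) π^(-(d+1)/2) t (t² + |y|²)^(-(d+1)/2)` of the `d`-dimensional
space `V`. The time `t` may be complex; for `0 < t.re` the power is the branch that continues the
one at real times. -/
def halfSpacePoissonKernel (t : ℂ) (y : V) : ℂ :=
  ((Gamma ((finrank ℝ V + 1) / 2) / π ^ (((finrank ℝ V : ℝ) + 1) / 2) : ℝ) : ℂ) * t *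
    (t ^ 2 + (‖y‖ : ℂ) ^ 2) ^ ((-((finrank ℝ V + 1) / 2) : ℝ) : ℂ)

/-- The Gaussian of which `halfSpacePoissonKernel` is a superposition over `0 < v`. -/
def poissonGaussian (t : ℂ) (v : ℝ) (y : V) : ℂ :=
  (v : ℂ) ^ finrank ℝ V * Complex.exp (-t * (v : ℂ) ^ 2) *
    Complex.exp (-((v : ℂ) ^ 2 * t⁻¹) * (‖y‖ : ℂ) ^ 2)

lemma add_sq_div_re_pos {t : ℂ} (ht : 0 < t.re) (r : ℝ) : 0 < (t + (r : ℂ) ^ 2 / t).re := by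
  rw [div_eq_mul_inv, Complex.add_re, ← Complex.ofReal_pow, Complex.re_ofReal_mul]
  exact add_pos_of_pos_of_nonneg ht (mul_nonneg (sq_nonneg r) (inv_re_pos ht).le)

lemma pi_mul_cpow_mul_pi_div_cpow {t : ℂ} (ht : 0 < t.re) (s : ℂ) :
    (π * t) ^ s * (π / t) ^ (1 / 2 : ℂ) = (π : ℂ) ^ (s + 1 / 2) * t ^ (s - 1 / 2) := by
  have ht0 : t ≠ 0 := by rintro rfl; simp at ht
  have hpi : 0 < (π : ℂ).re := by simpa using pi_pos
  have hpi0 : (π : ℂ) ≠ 0 := by exact_mod_cast pi_ne_zero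
  have harg : t.arg ≠ π := fun h => by
    have := (Complex.arg_eq_pi_iff.mp h).1
    linarith
  rw [div_eq_mul_inv (π : ℂ), mul_cpow_of_re_pos hpi ht, mul_cpow_of_re_pos hpi (inv_re_pos ht),
    Complex.inv_cpow _ _ harg, Complex.cpow_add _ _ hpi0, Complex.cpow_sub _ _ ht0]
  ring

lemma integral_poissonGaussian_time {t : ℂ} (ht : 0 < t.re) (y : V) :
    ∫ v in Ioi (0 : ℝ), poissonGaussian t v y =
      (π * t) ^ ((finrank ℝ V : ℂ) / 2) * (π / t) ^ (1 / 2 : ℂ) / 2 *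
        halfSpacePoissonKernel t y := by
  have ht0 : t ≠ 0 := by rintro rfl; simp at ht
  have hz := add_sq_div_re_pos ht ‖y‖
  have hgauss : ∀ v : ℝ, poissonGaussian t v y =
      (v : ℂ) ^ finrank ℝ V * Complex.exp (-(t + (‖y‖ : ℂ) ^ 2 / t) * (v : ℂ) ^ 2) := fun v => by
    rw [poissonGaussian, mul_assoc, ← Complex.exp_add]
    congr 2
    ring
  have hfactor : t ^ 2 + (‖y‖ : ℂ) ^ 2 = t * (t + (‖y‖ : ℂ) ^ 2 / t) := by
    field_simp
  have hexp : (finrank ℝ V : ℂ) / 2 - 1 / 2 = (finrank ℝ V + 1) / 2 - 1 := by ring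
  simp_rw [hgauss]
  rw [integral_pow_mul_cexp_neg_mul_sq hz, pi_mul_cpow_mul_pi_div_cpow ht, halfSpacePoissonKernel,
    hfactor, mul_cpow_of_re_pos ht hz]
  push_cast [Complex.ofReal_cpow pi_pos.le, ← Complex.Gamma_ofReal]
  rw [hexp, ← add_div, Complex.cpow_sub _ _ ht0, Complex.cpow_one, Complex.cpow_neg t]
  have htpow : t ^ (((finrank ℝ V : ℂ) + 1) / 2) ≠ 0 :=
    (Complex.cpow_ne_zero_iff_of_exponent_ne_zero
      (div_ne_zero (Nat.cast_add_one_ne_zero _) two_ne_zero)).mpr ht0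
  field_simp

lemma norm_poissonGaussian (t : ℂ) {v : ℝ} (hv : 0 < v) (y : V) :
    ‖poissonGaussian t v y‖ = v ^ finrank ℝ V * rexp (-t.re * v ^ 2) *
      rexp (-(v ^ 2 * (t⁻¹).re) * ‖y‖ ^ 2) := by
  rw [poissonGaussian, norm_mul, norm_mul, norm_cexp_neg_mul_sq, norm_cexp_neg_mul_sq, norm_pow,
    Complex.norm_real, Real.norm_of_nonneg hv.le, ← Complex.ofReal_pow, Complex.re_ofReal_mul]

variable [FiniteDimensional ℝ V] [MeasurableSpace V] [BorelSpace V]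

lemma fourier_poissonGaussian {t : ℂ} (ht : 0 < t.re) {v : ℝ} (hv : 0 < v) (w : V) :
    𝓕 (poissonGaussian t v : V → ℂ) w = (π * t) ^ ((finrank ℝ V : ℂ) / 2) *
      Complex.exp (-t * ((v : ℂ) ^ 2 + ((π * ‖w‖ : ℝ) : ℂ) ^ 2 / (v : ℂ) ^ 2)) := by
  have ht0 : t ≠ 0 := by rintro rfl; simp at ht
  have hv0 : (v : ℂ) ≠ 0 := by exact_mod_cast hv.ne'
  have hv2 : 0 < ((v : ℂ) ^ 2).re := by exact_mod_cast pow_pos hv 2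
  have hb : 0 < ((v : ℂ) ^ 2 * t⁻¹).re := by
    rw [← Complex.ofReal_pow, Complex.re_ofReal_mul]
    exact mul_pos (by positivity) (inv_re_pos ht)
  have hquot : 0 < (π / ((v : ℂ) ^ 2 * t⁻¹)).re := by
    rw [div_eq_mul_inv, Complex.re_ofReal_mul]
    exact mul_pos pi_pos (inv_re_pos hb)
  have hvpow : ((v : ℂ) ^ 2) ^ ((finrank ℝ V : ℂ) / 2) = (v : ℂ) ^ finrank ℝ V := by
    have harg : (v : ℂ).arg = 0 := Complex.arg_ofReal_of_nonneg hv.le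
    rw [← Complex.cpow_nat_mul' (by simp [harg, pi_pos]) (by simp [harg, pi_pos.le]),
      Nat.cast_ofNat, mul_div_cancel₀ _ two_ne_zero, Complex.cpow_natCast]
  have hpit : π * t = (v : ℂ) ^ 2 * (π / ((v : ℂ) ^ 2 * t⁻¹)) := by field_simp
  have hsmul : 𝓕 (poissonGaussian t v : V → ℂ) w =
      (v : ℂ) ^ finrank ℝ V * Complex.exp (-t * (v : ℂ) ^ 2) *
        𝓕 (fun y : V => Complex.exp (-((v : ℂ) ^ 2 * t⁻¹) * (‖y‖ : ℂ) ^ 2)) w :=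
    congrFun (VectorFourier.fourierIntegral_const_smul Real.fourierChar volume _
      (fun y : V => Complex.exp (-((v : ℂ) ^ 2 * t⁻¹) * (‖y‖ : ℂ) ^ 2)) _) w
  rw [hsmul, fourier_gaussian_innerProductSpace hb, hpit, mul_cpow_of_re_pos hv2 hquot, hvpow,
    mul_add, Complex.exp_add]
  have hexp : -π ^ 2 * (‖w‖ : ℂ) ^ 2 / ((v : ℂ) ^ 2 * t⁻¹) =
      -t * (((π * ‖w‖ : ℝ) : ℂ) ^ 2 / (v : ℂ) ^ 2) := by
    push_cast
    field_simp
  rw [hexp]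
  ring

lemma integral_norm_poissonGaussian {t : ℂ} (ht : 0 < t.re) {v : ℝ} (hv : 0 < v) :
    ∫ y : V, ‖poissonGaussian t v y‖ =
      (π / (t⁻¹).re) ^ ((finrank ℝ V : ℝ) / 2) * rexp (-t.re * v ^ 2) := by
  have hti := inv_re_pos ht
  have hquot : π / (v ^ 2 * (t⁻¹).re) = (v ^ 2)⁻¹ * (π / (t⁻¹).re) := by field_simp
  have hvpow : (v ^ 2) ^ ((finrank ℝ V : ℝ) / 2) = v ^ finrank ℝ V := by
    rw [← Real.rpow_natCast_mul hv.le, Nat.cast_ofNat, mul_div_cancel₀ _ two_ne_zero,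
      Real.rpow_natCast]
  simp_rw [norm_poissonGaussian t hv]
  rw [integral_const_mul, GaussianFourier.integral_rexp_neg_mul_sq_norm (by positivity), hquot,
    Real.mul_rpow (by positivity) (by positivity), Real.inv_rpow (by positivity), hvpow]
  field_simp

lemma integrable_poissonGaussian {t : ℂ} (ht : 0 < t.re) {v : ℝ} (hv : 0 < v) :
    Integrable (poissonGaussian t v : V → ℂ) := by
  have hb : 0 < ((v : ℂ) ^ 2 * t⁻¹).re := by
    rw [← Complex.ofReal_pow, Complex.re_ofReal_mul]
    exact mul_pos (by positivity) (inv_re_pos ht)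
  have h := GaussianFourier.integrable_cexp_neg_mul_sq_norm_add hb 0 (0 : V)
  simp only [zero_mul, add_zero] at h
  exact h.const_mul _

lemma integrable_uncurry_poissonGaussian {t : ℂ} (ht : 0 < t.re) :
    Integrable (Function.uncurry (poissonGaussian t : ℝ → V → ℂ))
      ((volume.restrict (Ioi (0 : ℝ))).prod volume) := by
  have hmeas : Measurable (Function.uncurry (poissonGaussian t : ℝ → V → ℂ)) := by
    unfold poissonGaussian Function.uncurry
    fun_prop
  refine (integrable_prod_iff hmeas.aestronglyMeasurable).mpr
    ⟨(ae_restrict_iff' measurableSet_Ioi).mpr (.of_forall fun v hv =>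
      integrable_poissonGaussian ht hv), ?_⟩
  exact IntegrableOn.congr_fun ((integrable_exp_neg_mul_sq ht).integrableOn.const_mul _)
    (fun v hv => (integral_norm_poissonGaussian ht hv).symm) measurableSet_Ioi

lemma pi_mul_cpow_mul_pi_div_cpow_ne_zero {t : ℂ} (ht : 0 < t.re) (s : ℂ) :
    (π * t) ^ s * (π / t) ^ (1 / 2 : ℂ) / 2 ≠ 0 := by
  have ht0 : t ≠ 0 := by rintro rfl; simp at ht
  have hpi0 : (π : ℂ) ≠ 0 := by exact_mod_cast pi_ne_zero
  simp [Complex.cpow_eq_zero_iff, ht0, hpi0]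

lemma integrable_halfSpacePoissonKernel {t : ℂ} (ht : 0 < t.re) :
    Integrable (halfSpacePoissonKernel t : V → ℂ) := by
  have h := (integrable_uncurry_poissonGaussian (V := V) ht).integral_prod_right
  simp only [Function.uncurry_apply_pair, integral_poissonGaussian_time ht] at h
  exact (integrable_const_mul_iff (pi_mul_cpow_mul_pi_div_cpow_ne_zero ht _).isUnit _).mp h

theorem fourier_halfSpacePoissonKernel {t : ℂ} (ht : 0 < t.re) (w : V) :
    𝓕 (halfSpacePoissonKernel t : V → ℂ) w = Complex.exp (-2 * π * t * ‖w‖) := by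
  have hint : Integrable (Function.uncurry fun (v : ℝ) (y : V) =>
      𝐞 (-inner ℝ y w) • poissonGaussian t v y) ((volume.restrict (Ioi 0)).prod volume) := by
    simp_rw [Circle.smul_def, smul_eq_mul]
    refine (integrable_uncurry_poissonGaussian ht).bdd_mul (c := 1)
      (Continuous.aestronglyMeasurable ?_) (.of_forall fun p => (Circle.norm_coe _).le)
    exact continuous_subtype_val.comp (Real.continuous_fourierChar.comp (by fun_prop))
  refine mul_left_cancel₀
    (pi_mul_cpow_mul_pi_div_cpow_ne_zero ht ((finrank ℝ V : ℂ) / 2)) ?_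
  calc (π * t) ^ ((finrank ℝ V : ℂ) / 2) * (π / t) ^ (1 / 2 : ℂ) / 2 *
        𝓕 (halfSpacePoissonKernel t : V → ℂ) w
      = ∫ y : V, ∫ v in Ioi (0 : ℝ), 𝐞 (-inner ℝ y w) • poissonGaussian t v y := by
        rw [Real.fourier_eq, ← integral_const_mul]
        congr with y
        simp_rw [Circle.smul_def]
        rw [integral_smul, integral_poissonGaussian_time ht, mul_smul_comm]
    _ = ∫ v in Ioi (0 : ℝ), 𝓕 (poissonGaussian t v : V → ℂ) w :=
        (integral_integral_swap hint).symm
    _ = (π * t) ^ ((finrank ℝ V : ℂ) / 2) * ∫ v in Ioi (0 : ℝ),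
          Complex.exp (-t * ((v : ℂ) ^ 2 + ((π * ‖w‖ : ℝ) : ℂ) ^ 2 / (v : ℂ) ^ 2)) := by
        rw [← integral_const_mul]
        exact setIntegral_congr_fun measurableSet_Ioi fun v hv => fourier_poissonGaussian ht hv w
    _ = _ := by
        rw [integral_cexp_neg_mul_sq_add_div_sq (by positivity) ht]
        push_cast
        ring_nf

end PoissonKernel

/-! ### Averaging the Poisson kernel over imaginary times -/

section AveragedPoissonKernel

open Module
open scoped ENNReal NNReal

lemma integral_add_norm_sub_rpow_neg {ε : ℝ} (hε : 0 < ε) (p r : ℝ) :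
    ∫ τ : ℝ, (ε + ‖τ - r‖) ^ (-p) = ε ^ (1 - p) * ∫ u : ℝ, (1 + ‖u‖) ^ (-p) := by
  have hscale : ∀ τ : ℝ, (ε + ‖τ‖) ^ (-p) = ε ^ (-p) * (1 + ‖τ / ε‖) ^ (-p) := fun τ => by
    rw [← Real.mul_rpow hε.le (by positivity), norm_div, Real.norm_of_nonneg hε.le]
    field_simp
  rw [integral_sub_right_eq_self (fun τ : ℝ => (ε + ‖τ‖) ^ (-p)) r]
  simp_rw [hscale]
  rw [integral_const_mul, Measure.integral_comp_div (fun u : ℝ => (1 + ‖u‖) ^ (-p)) ε,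
    abs_of_pos hε, smul_eq_mul, sub_eq_add_neg, Real.rpow_add hε, Real.rpow_one]
  ring

lemma integrable_add_norm_sub_rpow_neg {ε p : ℝ} (hε : 0 < ε) (hp : 1 < p) (r : ℝ) :
    Integrable fun τ : ℝ => (ε + ‖τ - r‖) ^ (-p) := by
  have hone : Integrable fun u : ℝ => (1 + ‖u‖) ^ (-p) :=
    integrable_one_add_norm (by simpa using hp)
  refine (((hone.comp_div hε.ne').comp_sub_right r).const_mul (ε ^ (-p))).congr
    (.of_forall fun τ => ?_)
  simp only
  rw [← Real.mul_rpow hε.le (by positivity), norm_div, Real.norm_of_nonneg hε.le]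
  field_simp

lemma lintegral_one_add_add_norm_sub_rpow_neg_le {p : ℝ} (hp : 1 < p) :
    ∃ C : ℝ≥0, ∀ ε : ℝ, 0 < ε → ε ≤ 1 → ∀ r : ℝ,
      ∫⁻ τ in Icc (1 : ℝ) 2, ENNReal.ofReal (1 + (ε + ‖τ - r‖) ^ (-p)) ≤
        C * ENNReal.ofReal (ε ^ (1 - p)) := by
  obtain ⟨C, hC⟩ : ∃ C : ℝ≥0, (C : ℝ) = 1 + ∫ u : ℝ, (1 + ‖u‖) ^ (-p) :=
    ⟨⟨_, by positivity⟩, rfl⟩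
  refine ⟨C, fun ε hε hε1 r => ?_⟩
  have hone : 1 ≤ ε ^ (1 - p) := Real.one_le_rpow_of_pos_of_le_one_of_nonpos hε hε1 (by linarith)
  have hbump : ∫⁻ τ : ℝ, ENNReal.ofReal ((ε + ‖τ - r‖) ^ (-p)) =
      ENNReal.ofReal (ε ^ (1 - p) * ∫ u : ℝ, (1 + ‖u‖) ^ (-p)) := by
    rw [← integral_add_norm_sub_rpow_neg hε p r, ofReal_integral_eq_lintegral_ofReal
      (integrable_add_norm_sub_rpow_neg hε hp r) (.of_forall fun τ => by positivity)]
  calc ∫⁻ τ in Icc (1 : ℝ) 2, ENNReal.ofReal (1 + (ε + ‖τ - r‖) ^ (-p))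
      = ∫⁻ τ in Icc (1 : ℝ) 2, (1 + ENNReal.ofReal ((ε + ‖τ - r‖) ^ (-p))) := by
        refine lintegral_congr fun τ => ?_
        rw [ENNReal.ofReal_add zero_le_one (by positivity), ENNReal.ofReal_one]
    _ = 1 + ∫⁻ τ in Icc (1 : ℝ) 2, ENNReal.ofReal ((ε + ‖τ - r‖) ^ (-p)) := by
        rw [lintegral_add_left measurable_const, setLIntegral_one, Real.volume_Icc]
        norm_num
    _ ≤ 1 + ENNReal.ofReal (ε ^ (1 - p) * ∫ u : ℝ, (1 + ‖u‖) ^ (-p)) := by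
        rw [← hbump]
        gcongr
        exact Measure.restrict_le_self
    _ ≤ ENNReal.ofReal (C * ε ^ (1 - p)) := by
        rw [hC, ← ENNReal.ofReal_one, ← ENNReal.ofReal_add zero_le_one (by positivity)]
        refine ENNReal.ofReal_le_ofReal ?_
        linarith
    _ = _ := by
        rw [ENNReal.ofReal_mul C.coe_nonneg, ENNReal.ofReal_coe_nnreal]

lemma mul_rpow_neg_le {p s u : ℝ} (hp : 0 ≤ p) (hs : 0 < s) (hu : 0 < u) (h : s ≤ 3 * (1 + u)) :
    (s * u) ^ (-p) ≤ 6 ^ p * s ^ (-(2 * p)) * (1 + u ^ (-p)) := by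
  have hratio : (s * u⁻¹) ^ p ≤ 6 ^ p * (1 + u ^ (-p)) := by
    rw [Real.rpow_neg hu.le, ← Real.inv_rpow hu.le]
    have hle : s * u⁻¹ ≤ 3 * (1 + u⁻¹) := by
      rw [← div_eq_mul_inv, div_le_iff₀ hu]
      field_simp
      linarith
    rcases le_total u⁻¹ 1 with h1 | h1
    · calc (s * u⁻¹) ^ p ≤ 6 ^ p := Real.rpow_le_rpow (by positivity) (by linarith) hp
        _ ≤ 6 ^ p * (1 + u⁻¹ ^ p) := le_mul_of_one_le_right (by positivity)
          (le_add_of_nonneg_right (by positivity))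
    · calc (s * u⁻¹) ^ p ≤ (6 * u⁻¹) ^ p :=
          Real.rpow_le_rpow (by positivity) (by linarith) hp
        _ = 6 ^ p * u⁻¹ ^ p := Real.mul_rpow (by norm_num) (by positivity)
        _ ≤ 6 ^ p * (1 + u⁻¹ ^ p) := by gcongr; linarith
  have hsplit : (s * u) ^ (-p) = s ^ (-(2 * p)) * (s * u⁻¹) ^ p := by
    rw [Real.mul_rpow hs.le hu.le, Real.mul_rpow hs.le (by positivity), Real.inv_rpow hu.le,
      ← Real.rpow_neg hu.le, ← mul_assoc, ← Real.rpow_add hs]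
    ring_nf
  rw [hsplit, mul_comm (6 ^ p : ℝ), mul_assoc]
  gcongr

lemma mul_div_two_le_norm_sq_add_sq {t : ℂ} {r : ℝ} (hre : 0 ≤ t.re) :
    (t.im + r) * ((t.re + ‖t.im - r‖) / 2) ≤ ‖t ^ 2 + (r : ℂ) ^ 2‖ := by
  have hfactor : t ^ 2 + (r : ℂ) ^ 2 = (t + r * Complex.I) * (t - r * Complex.I) := by
    linear_combination (r : ℂ) ^ 2 * Complex.I_sq
  have hplus : t.im + r ≤ ‖t + r * Complex.I‖ := by
    simpa using (le_abs_self _).trans (Complex.abs_im_le_norm (t + r * Complex.I))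
  have hminus : (t.re + ‖t.im - r‖) / 2 ≤ ‖t - r * Complex.I‖ := by
    have h1 : t.re ≤ ‖t - r * Complex.I‖ := by
      simpa using Complex.re_le_norm (t - r * Complex.I)
    have h2 : ‖t.im - r‖ ≤ ‖t - r * Complex.I‖ := by
      simpa using Complex.abs_im_le_norm (t - r * Complex.I)
    linarith
  rw [hfactor, norm_mul]
  exact mul_le_mul hplus hminus (by positivity) (norm_nonneg _)

lemma norm_sq_add_sq_rpow_neg_le {p r : ℝ} {t : ℂ} (hp : 0 ≤ p) (hr : 0 ≤ r) (hre : 0 < t.re)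
    (him : t.im ∈ Icc (1 : ℝ) 2) :
    ‖t ^ 2 + (r : ℂ) ^ 2‖ ^ (-p) ≤
      2 ^ p * (6 ^ p * (1 + r) ^ (-(2 * p)) * (1 + (t.re + ‖t.im - r‖) ^ (-p))) := by
  have hlow : (1 + r) * (t.re + ‖t.im - r‖) * 2⁻¹ ≤ ‖t ^ 2 + (r : ℂ) ^ 2‖ := by
    refine le_trans ?_ (mul_div_two_le_norm_sq_add_sq hre.le)
    rw [mul_assoc, ← div_eq_mul_inv]
    gcongr
    exact him.1
  have hfar : 1 + r ≤ 3 * (1 + (t.re + ‖t.im - r‖)) := by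
    have := neg_abs_le (t.im - r)
    rw [← Real.norm_eq_abs] at this
    linarith [him.2, norm_nonneg (t.im - r)]
  calc ‖t ^ 2 + (r : ℂ) ^ 2‖ ^ (-p)
      ≤ ((1 + r) * (t.re + ‖t.im - r‖) * 2⁻¹) ^ (-p) :=
        Real.rpow_le_rpow_of_nonpos (by positivity) hlow (neg_nonpos.mpr hp)
    _ = 2 ^ p * ((1 + r) * (t.re + ‖t.im - r‖)) ^ (-p) := by
        rw [Real.mul_rpow (by positivity) (by norm_num), Real.inv_rpow zero_le_two,
          Real.rpow_neg zero_le_two, inv_inv, mul_comm]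
    _ ≤ _ := by
        gcongr
        exact mul_rpow_neg_le hp (by positivity) (by positivity) hfar

variable {V : Type*} [NormedAddCommGroup V] [InnerProductSpace ℝ V]

lemma norm_halfSpacePoissonKernel (t : ℂ) (y : V) :
    ‖halfSpacePoissonKernel t y‖ =
      Gamma ((finrank ℝ V + 1) / 2) / π ^ (((finrank ℝ V : ℝ) + 1) / 2) * ‖t‖ *
        ‖t ^ 2 + (‖y‖ : ℂ) ^ 2‖ ^ (-(((finrank ℝ V : ℝ) + 1) / 2)) := by
  have hGamma : 0 < Gamma (((finrank ℝ V : ℝ) + 1) / 2) := Gamma_pos_of_pos (by positivity)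
  rw [halfSpacePoissonKernel, norm_mul, norm_mul, Complex.norm_cpow_real, Complex.norm_real,
    Real.norm_of_nonneg (div_nonneg hGamma.le (by positivity))]

variable (V) in
lemma norm_halfSpacePoissonKernel_le : ∃ C : ℝ≥0, ∀ t : ℂ, 0 < t.re → t.re ≤ 1 →
    t.im ∈ Icc (1 : ℝ) 2 → ∀ y : V,
      ‖halfSpacePoissonKernel t y‖ ≤ C * (1 + ‖y‖) ^ (-((finrank ℝ V : ℝ) + 1)) *
        (1 + (t.re + ‖t.im - ‖y‖‖) ^ (-(((finrank ℝ V : ℝ) + 1) / 2))) := by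
  set p : ℝ := ((finrank ℝ V : ℝ) + 1) / 2 with hp
  have hp0 : 0 ≤ p := by positivity
  have hGamma : 0 < Gamma p := Gamma_pos_of_pos (by positivity)
  obtain ⟨C, hC⟩ : ∃ C : ℝ≥0, (C : ℝ) = Gamma p / π ^ p * 3 * (2 ^ p * 6 ^ p) :=
    ⟨⟨_, mul_nonneg (mul_nonneg (div_nonneg hGamma.le (by positivity)) (by norm_num))
      (by positivity)⟩, rfl⟩
  refine ⟨C, fun t hre hre1 him y => ?_⟩
  have hnorm : ‖t‖ ≤ 3 := by
    refine (Complex.norm_le_abs_re_add_abs_im t).trans ?_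
    rw [abs_of_pos hre, abs_of_nonneg (by linarith [him.1])]
    linarith [him.2]
  have hexp : -((finrank ℝ V : ℝ) + 1) = -(2 * p) := by rw [hp]; ring
  rw [norm_halfSpacePoissonKernel, ← hp, hexp]
  calc Gamma p / π ^ p * ‖t‖ * ‖t ^ 2 + (‖y‖ : ℂ) ^ 2‖ ^ (-p)
      ≤ Gamma p / π ^ p * 3 *
        (2 ^ p * (6 ^ p * (1 + ‖y‖) ^ (-(2 * p)) * (1 + (t.re + ‖t.im - ‖y‖‖) ^ (-p)))) := by
        gcongr
        exact norm_sq_add_sq_rpow_neg_le hp0 (norm_nonneg y) hre him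
    _ = _ := by
        rw [hC]
        ring

lemma lintegral_enorm_halfSpacePoissonKernel_le (hV : 1 < finrank ℝ V) :
    ∃ C : ℝ≥0, ∀ ε : ℝ, 0 < ε → ε ≤ 1 → ∀ y : V,
      ∫⁻ τ in Icc (1 : ℝ) 2, ‖halfSpacePoissonKernel (ε + τ * Complex.I) y‖ₑ ≤
        C * ENNReal.ofReal (ε ^ (-((finrank ℝ V : ℝ) - 1) / 2)) *
          ENNReal.ofReal ((1 + ‖y‖) ^ (-((finrank ℝ V : ℝ) + 1))) := by
  obtain ⟨C, hC⟩ := norm_halfSpacePoissonKernel_le V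
  have hp : (1 : ℝ) < (finrank ℝ V + 1) / 2 := by
    have : (1 : ℝ) < finrank ℝ V := by exact_mod_cast hV
    linarith
  obtain ⟨D, hD⟩ := lintegral_one_add_add_norm_sub_rpow_neg_le hp
  refine ⟨C * D, fun ε hε hε1 y => ?_⟩
  have hexp : -((finrank ℝ V : ℝ) - 1) / 2 = 1 - (finrank ℝ V + 1) / 2 := by ring
  calc ∫⁻ τ in Icc (1 : ℝ) 2, ‖halfSpacePoissonKernel (ε + τ * Complex.I) y‖ₑ
      ≤ ∫⁻ τ in Icc (1 : ℝ) 2, ENNReal.ofReal (C * (1 + ‖y‖) ^ (-((finrank ℝ V : ℝ) + 1))) *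
          ENNReal.ofReal (1 + (ε + ‖τ - ‖y‖‖) ^ (-(((finrank ℝ V : ℝ) + 1) / 2))) := by
        refine setLIntegral_mono (by fun_prop) fun τ hτ => ?_
        rw [← ENNReal.ofReal_mul (by positivity), ← ofReal_norm]
        refine ENNReal.ofReal_le_ofReal ?_
        simpa using hC (ε + τ * Complex.I) (by simpa using hε) (by simpa using hε1)
          (by simpa using hτ) y
    _ ≤ ENNReal.ofReal (C * (1 + ‖y‖) ^ (-((finrank ℝ V : ℝ) + 1))) *
          (D * ENNReal.ofReal (ε ^ (1 - ((finrank ℝ V : ℝ) + 1) / 2))) := by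
        rw [lintegral_const_mul _ (by fun_prop)]
        gcongr
        exact hD ε hε hε1 ‖y‖
    _ = _ := by
        rw [hexp, ENNReal.ofReal_mul C.coe_nonneg, ENNReal.ofReal_coe_nnreal, ENNReal.coe_mul]
        ring

end AveragedPoissonKernel

/-! ### Integrating periodic functions over the cube -/

section Periodic

open scoped ENNReal NNReal Pointwise

variable {n : ℕ}

/-- The integer vector `k`, as a point of Euclidean space. -/
def latticeVec (k : Fin n → ℤ) : EuclideanSpace ℝ (Fin n) :=
  WithLp.toLp 2 fun i => (k i : ℝ)

/-- `ℤⁿ`-periodicity for functions with values in an arbitrary type, so that it applies to a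
function, its derivatives and its norm alike; for real functions it is `ZPeriodic`. -/
def LatticePeriodic {X : Type*} (f : EuclideanSpace ℝ (Fin n) → X) : Prop :=
  ∀ k : Fin n → ℤ, Function.Periodic f (latticeVec k)

lemma ZPeriodic.latticePeriodic {φ : EuclideanSpace ℝ (Fin n) → ℝ} (hφ : ZPeriodic φ) :
    LatticePeriodic φ :=
  fun k x => hφ x k

lemma LatticePeriodic.comp {X Y : Type*} {f : EuclideanSpace ℝ (Fin n) → X}
    (hf : LatticePeriodic f) (g : X → Y) : LatticePeriodic fun x => g (f x) :=
  fun k => (hf k).comp g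

lemma LatticePeriodic.fderiv {F : Type*} [NormedAddCommGroup F] [NormedSpace ℝ F]
    {f : EuclideanSpace ℝ (Fin n) → F} (hf : LatticePeriodic f) : LatticePeriodic (fderiv ℝ f) := by
  intro k x
  rw [← fderiv_comp_add_right]
  exact congrArg (_root_.fderiv ℝ · x) (funext (hf k))

/-- The lattice `ℤⁿ`, in the form for which Mathlib knows a fundamental domain. -/
abbrev integerLattice (n : ℕ) : AddSubgroup (EuclideanSpace ℝ (Fin n)) :=
  (Submodule.span ℤ (range (EuclideanSpace.basisFun (Fin n) ℝ).toBasis)).toAddSubgroup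

instance integerLattice.instCountable : Countable (integerLattice n) :=
  inferInstanceAs <| Countable <|
    Submodule.span ℤ (range (EuclideanSpace.basisFun (Fin n) ℝ).toBasis)

lemma mem_integerLattice_iff {x : EuclideanSpace ℝ (Fin n)} :
    x ∈ integerLattice n ↔ ∃ k : Fin n → ℤ, latticeVec k = x := by
  rw [Submodule.mem_toAddSubgroup, Module.Basis.mem_span_iff_repr_mem]
  simp only [OrthonormalBasis.coe_toBasis_repr_apply, EuclideanSpace.basisFun_repr, mem_range,
    algebraMap_int_eq, eq_intCast]
  rw [Classical.skolem]
  exact exists_congr fun k => ⟨fun h => by ext i; exact h i, fun h i => by rw [← h]; rfl⟩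

lemma Qcube_eq_fundamentalDomain :
    Qcube n = ZSpan.fundamentalDomain (EuclideanSpace.basisFun (Fin n) ℝ).toBasis := by
  ext x
  simp [Qcube]

lemma isAddFundamentalDomain_Qcube : IsAddFundamentalDomain (integerLattice n) (Qcube n) := by
  rw [Qcube_eq_fundamentalDomain]
  exact ZSpan.isAddFundamentalDomain' _ _

lemma measurableSet_Qcube : MeasurableSet (Qcube n) := by
  rw [Qcube_eq_fundamentalDomain]
  exact ZSpan.fundamentalDomain_measurableSet _

lemma preimage_toLp_Qcube : WithLp.toLp 2 ⁻¹' Qcube n = Set.pi univ fun _ => Ico (0 : ℝ) 1 := by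
  ext x
  simp [Qcube]

lemma volume_Qcube : volume (Qcube n) = 1 := by
  rw [← (PiLp.volume_preserving_toLp (Fin n)).measure_preimage
    measurableSet_Qcube.nullMeasurableSet, preimage_toLp_Qcube, Real.volume_pi_Ico]
  simp

lemma isBounded_Qcube : Bornology.IsBounded (Qcube n) := by
  rw [Qcube_eq_fundamentalDomain]
  exact ZSpan.fundamentalDomain_isBounded _

lemma integrableOn_Qcube {F : Type*} [NormedAddCommGroup F] {f : EuclideanSpace ℝ (Fin n) → F}
    (hf : Continuous f) : IntegrableOn f (Qcube n) :=
  (hf.continuousOn.integrableOn_compact isBounded_Qcube.isCompact_closure).mono_set subset_closure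

lemma LatticePeriodic.vadd_eq {X : Type*} {f : EuclideanSpace ℝ (Fin n) → X}
    (hf : LatticePeriodic f) (g : integerLattice n) (x : EuclideanSpace ℝ (Fin n)) :
    f (g +ᵥ x) = f x := by
  obtain ⟨k, hk⟩ := mem_integerLattice_iff.mp g.2
  rw [AddSubgroup.vadd_def, vadd_eq_add, ← hk, add_comm, hf k]

lemma LatticePeriodic.setLIntegral_Qcube_add {g : EuclideanSpace ℝ (Fin n) → ℝ≥0∞}
    (hg : LatticePeriodic g) (z : EuclideanSpace ℝ (Fin n)) :
    ∫⁻ q in Qcube n, g (z + q) = ∫⁻ q in Qcube n, g q := by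
  rw [(isAddFundamentalDomain_Qcube (n := n)).setLIntegral_eq
    (isAddFundamentalDomain_Qcube.vadd_of_comm z) g hg.vadd_eq, ← image_vadd]
  exact (measurePreserving_add_left volume z).setLIntegral_comp_emb
    (measurableEmbedding_addLeft z) g _

lemma LatticePeriodic.setIntegral_Qcube_add {F : Type*} [NormedAddCommGroup F] [NormedSpace ℝ F]
    {f : EuclideanSpace ℝ (Fin n) → F} (hf : LatticePeriodic f) (z : EuclideanSpace ℝ (Fin n)) :
    ∫ q in Qcube n, f (z + q) = ∫ q in Qcube n, f q := by
  rw [(isAddFundamentalDomain_Qcube (n := n)).setIntegral_eq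
    (isAddFundamentalDomain_Qcube.vadd_of_comm z) hf.vadd_eq, ← image_vadd]
  exact ((measurePreserving_add_left volume z).setIntegral_image_emb
    (measurableEmbedding_addLeft z) f _).symm

lemma LatticePeriodic.lintegral_mul_comp_add_le {w ψ g : EuclideanSpace ℝ (Fin n) → ℝ≥0∞}
    (hg : LatticePeriodic g) (hψ : Measurable ψ) (hgm : Measurable g)
    (hwψ : ∀ y, ∀ q ∈ Qcube n, w y ≤ ψ (y - q)) (x : EuclideanSpace ℝ (Fin n)) :
    ∫⁻ y, w y * g (x + y) ≤ (∫⁻ y, ψ y) * ∫⁻ q in Qcube n, g q :=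
  calc ∫⁻ y, w y * g (x + y)
      = ∫⁻ y, ∫⁻ _q in Qcube n, w y * g (x + y) := by
        simp only [setLIntegral_const, volume_Qcube, mul_one]
    _ ≤ ∫⁻ y, ∫⁻ q in Qcube n, ψ (y - q) * g (x + y) := by
        refine lintegral_mono fun y => setLIntegral_mono' measurableSet_Qcube fun q hq => ?_
        gcongr
        exact hwψ y q hq
    _ = ∫⁻ q in Qcube n, ∫⁻ y, ψ (y - q) * g (x + y) :=
        lintegral_lintegral_swap (Measurable.aemeasurable (by unfold Function.uncurry; fun_prop))
    _ = ∫⁻ q in Qcube n, ∫⁻ u, ψ u * g (x + u + q) := by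
        refine lintegral_congr fun q => ?_
        rw [← lintegral_add_right_eq_self _ q]
        simp only [add_sub_cancel_right, add_assoc]
    _ = ∫⁻ u, ∫⁻ q in Qcube n, ψ u * g (x + u + q) :=
        lintegral_lintegral_swap (Measurable.aemeasurable (by unfold Function.uncurry; fun_prop))
    _ = ∫⁻ u, ψ u * ∫⁻ q in Qcube n, g q := by
        refine lintegral_congr fun u => ?_
        rw [lintegral_const_mul _ (by fun_prop), hg.setLIntegral_Qcube_add]
    _ = (∫⁻ u, ψ u) * ∫⁻ q in Qcube n, g q := lintegral_mul_const _ hψ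

lemma one_add_norm_rpow_neg_le {V : Type*} [SeminormedAddCommGroup V] {p r : ℝ} (hp : 0 ≤ p)
    {y q : V} (hq : ‖q‖ ≤ r) :
    (1 + ‖y‖) ^ (-p) ≤ (1 + r) ^ p * (1 + ‖y - q‖) ^ (-p) := by
  have hr : 0 ≤ r := (norm_nonneg q).trans hq
  have hle : 1 + ‖y - q‖ ≤ (1 + r) * (1 + ‖y‖) := by
    nlinarith [norm_sub_le y q, mul_nonneg hr (norm_nonneg y)]
  calc (1 + ‖y‖) ^ (-p) = (1 + r) ^ p * ((1 + r) * (1 + ‖y‖)) ^ (-p) := by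
        rw [Real.mul_rpow (by positivity) (by positivity), ← mul_assoc,
          ← Real.rpow_add (by positivity), add_neg_cancel, Real.rpow_zero, one_mul]
    _ ≤ (1 + r) ^ p * (1 + ‖y - q‖) ^ (-p) := by
        gcongr ?_ * ?_
        exact Real.rpow_le_rpow_of_nonpos (by positivity) hle (neg_nonpos.mpr hp)

lemma exists_lintegral_one_add_norm_rpow_neg_mul_comp_add_le {p : ℝ} (hp : n < p) :
    ∃ C : ℝ≥0, ∀ g : EuclideanSpace ℝ (Fin n) → ℝ≥0∞, LatticePeriodic g → Measurable g → ∀ x,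
      ∫⁻ y, ENNReal.ofReal ((1 + ‖y‖) ^ (-p)) * g (x + y) ≤ C * ∫⁻ q in Qcube n, g q := by
  obtain ⟨r, hr⟩ := (isBounded_Qcube (n := n)).exists_norm_le
  have hp0 : 0 ≤ p := n.cast_nonneg.trans hp.le
  have hint : Integrable fun y : EuclideanSpace ℝ (Fin n) => (1 + r) ^ p * (1 + ‖y‖) ^ (-p) :=
    (integrable_one_add_norm (by simpa using hp)).const_mul _
  refine ⟨(∫⁻ y : EuclideanSpace ℝ (Fin n),
    ENNReal.ofReal ((1 + r) ^ p * (1 + ‖y‖) ^ (-p))).toNNReal, fun g hg hgm x => ?_⟩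
  rw [ENNReal.coe_toNNReal hint.lintegral_lt_top.ne]
  refine hg.lintegral_mul_comp_add_le (by fun_prop) hgm (fun y q hq => ?_) x
  exact ENNReal.ofReal_le_ofReal (one_add_norm_rpow_neg_le hp0 (hr q hq))

end Periodic

/-! ### The Fourier expansion of an eigenfunction -/

section FourierExpansion

open scoped RealInnerProductSpace FourierTransform

variable {n : ℕ}

lemma setIntegral_Qcube_fderiv {F : Type*} [NormedAddCommGroup F] [NormedSpace ℝ F]
    [CompleteSpace F] {f : EuclideanSpace ℝ (Fin n) → F} (hf : LatticePeriodic f)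
    (hfd : ContDiff ℝ 1 f) (v : EuclideanSpace ℝ (Fin n)) :
    ∫ x in Qcube n, fderiv ℝ f x v = 0 := by
  have htrans : Continuous fun x => f (v + x) := hfd.continuous.comp (continuous_const_add v)
  have hline : ∀ x, ∫ s in (0 : ℝ)..1, fderiv ℝ f (s • v + x) v = f (v + x) - f x := fun x => by
    have hderiv : ∀ s : ℝ, HasDerivAt (fun s : ℝ => f (s • v + x)) (fderiv ℝ f (s • v + x) v) s :=
      fun s => (hfd.differentiable one_ne_zero _).hasFDerivAt.comp_hasDerivAt s
        (by simpa using ((hasDerivAt_id s).smul_const v).add_const x)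
    rw [intervalIntegral.integral_eq_sub_of_hasDerivAt (fun s _ => hderiv s)
      ((by fun_prop : Continuous fun s : ℝ => fderiv ℝ f (s • v + x) v).intervalIntegrable _ _)]
    simp
  have hswap : Integrable (Function.uncurry fun (s : ℝ) x => fderiv ℝ f (s • v + x) v)
      ((volume.restrict (uIoc 0 1)).prod (volume.restrict (Qcube n))) := by
    rw [Measure.prod_restrict]
    refine IntegrableOn.mono_set (ContinuousOn.integrableOn_compact
      (isCompact_uIcc.prod isBounded_Qcube.isCompact_closure) (Continuous.continuousOn ?_))
      (prod_mono uIoc_subset_uIcc subset_closure)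
    unfold Function.uncurry
    fun_prop
  calc ∫ x in Qcube n, fderiv ℝ f x v
      = ∫ s in (0 : ℝ)..1, ∫ x in Qcube n, fderiv ℝ f (s • v + x) v := by
        simp only [(hf.fderiv.comp (· v)).setIntegral_Qcube_add, intervalIntegral.integral_const,
          sub_zero, one_smul]
    _ = ∫ x in Qcube n, (f (v + x) - f x) := by
        rw [intervalIntegral_integral_swap hswap]
        simp only [hline]
    _ = 0 := by
        rw [integral_sub (integrableOn_Qcube htrans) (integrableOn_Qcube hfd.continuous),
          hf.setIntegral_Qcube_add, sub_self]

/-- The `k`-th Fourier coefficient of a periodic function, as an integral over the cube rather than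
over the torus, so that calculus on `ℝⁿ` applies. -/
def cubeFourierCoeff (f : EuclideanSpace ℝ (Fin n) → ℂ) (k : Fin n → ℤ) : ℂ :=
  ∫ x in Qcube n, 𝐞 (-⟪latticeVec k, x⟫) * f x

lemma inner_latticeVec (k l : Fin n → ℤ) :
    ⟪latticeVec k, latticeVec l⟫ = ((∑ i, k i * l i : ℤ) : ℝ) := by
  simp [latticeVec, PiLp.inner_apply, mul_comm]

lemma latticePeriodic_fourierChar_inner (k : Fin n → ℤ) :
    LatticePeriodic fun x => 𝐞 ⟪latticeVec k, x⟫ := by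
  intro l x
  have hone : 𝐞 ⟪latticeVec k, latticeVec l⟫ = 1 := by
    rw [inner_latticeVec, Real.fourierChar_apply', mul_comm]
    exact Circle.exp_int_mul_two_pi _
  simp only [inner_add_right, AddChar.map_add_eq_mul, hone, mul_one]

lemma cubeFourierCoeff_fderiv {f : EuclideanSpace ℝ (Fin n) → ℂ}
    (hf : LatticePeriodic f) (hfd : ContDiff ℝ 1 f) (k : Fin n → ℤ)
    (v : EuclideanSpace ℝ (Fin n)) :
    cubeFourierCoeff (fun x => fderiv ℝ f x v) k =
      2 * π * Complex.I * ⟪latticeVec k, v⟫ * cubeFourierCoeff f k := by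
  set e : EuclideanSpace ℝ (Fin n) → ℂ := fun x => 𝐞 (-⟪latticeVec k, x⟫) with he
  have hecont : ContDiff ℝ 1 e := by
    simp only [he, Real.fourierChar_apply]
    exact ((Complex.ofRealCLM.contDiff.comp (contDiff_const.mul
      (contDiff_const.inner ℝ contDiff_id).neg)).mul contDiff_const).cexp
  have hefderiv : ∀ x, fderiv ℝ e x v = -2 * π * Complex.I * e x * ⟪latticeVec k, v⟫ := fun x =>
    congrArg (· v)
      (hasFDerivAt_fourierChar_neg_bilinear_right (innerSL ℝ) (latticeVec k) x).fderiv
  have heper : LatticePeriodic e := by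
    simpa only [he, AddChar.map_neg_eq_inv] using
      (latticePeriodic_fourierChar_inner k).comp fun z => ((z⁻¹ : Circle) : ℂ)
  have hprod : ∀ x, fderiv ℝ (fun x => e x * f x) x v =
      e x * fderiv ℝ f x v - 2 * π * Complex.I * ⟪latticeVec k, v⟫ * (e x * f x) := by
    intro x
    rw [fderiv_fun_mul (hecont.differentiable one_ne_zero x) (hfd.differentiable one_ne_zero x),
      add_apply, smul_apply, smul_apply, hefderiv, smul_eq_mul, smul_eq_mul]
    ring
  have hzero := setIntegral_Qcube_fderiv (f := fun x => e x * f x)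
    (fun l x => by simp only [heper l x, hf l x]) (hecont.mul hfd) v
  have hcont : Continuous fun x => e x * fderiv ℝ f x v :=
    hecont.continuous.mul ((hfd.continuous_fderiv one_ne_zero).clm_apply continuous_const)
  simp only [hprod] at hzero
  rw [integral_sub (integrableOn_Qcube hcont) ((integrableOn_Qcube
    (hecont.mul hfd).continuous).const_mul _), integral_const_mul, sub_eq_zero] at hzero
  exact hzero

lemma cubeFourierCoeff_ofReal_fderiv {φ : EuclideanSpace ℝ (Fin n) → ℝ} (hφ : LatticePeriodic φ)
    (hφd : ContDiff ℝ 1 φ) (k : Fin n → ℤ) (v : EuclideanSpace ℝ (Fin n)) :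
    cubeFourierCoeff (fun x => (fderiv ℝ φ x v : ℂ)) k =
      2 * π * Complex.I * ⟪latticeVec k, v⟫ * cubeFourierCoeff (fun x => (φ x : ℂ)) k := by
  rw [← cubeFourierCoeff_fderiv (hφ.comp Complex.ofReal)
    (Complex.ofRealCLM.contDiff.comp hφd) k v]
  congr 1 with x
  have hcomp := Complex.ofRealCLM.hasFDerivAt.comp x
    (hφd.differentiable one_ne_zero x).hasFDerivAt
  exact (congrArg (· v) hcomp.fderiv).symm

lemma cubeFourierCoeff_lap {φ : EuclideanSpace ℝ (Fin n) → ℝ} (hφ : LatticePeriodic φ)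
    (hφd : ContDiff ℝ 2 φ) (k : Fin n → ℤ) :
    cubeFourierCoeff (fun x => (lap φ x : ℂ)) k =
      -(2 * π * ‖latticeVec k‖) ^ 2 * cubeFourierCoeff (fun x => (φ x : ℂ)) k := by
  set b : Fin n → EuclideanSpace ℝ (Fin n) := fun i => EuclideanSpace.single i 1
  have hpartial : ∀ i, ContDiff ℝ 1 fun y => fderiv ℝ φ y (b i) := fun i =>
    (hφd.fderiv_right (m := 1) (by norm_num)).clm_apply contDiff_const
  have hcont : ∀ i, Continuous fun x =>
      (𝐞 (-⟪latticeVec k, x⟫) : ℂ) * (fderiv ℝ (fun y => fderiv ℝ φ y (b i)) x (b i) : ℂ) :=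
    fun i => by
      have := ((hpartial i).continuous_fderiv one_ne_zero).clm_apply (continuous_const (y := b i))
      have := Real.continuous_fourierChar
      fun_prop
  calc cubeFourierCoeff (fun x => (lap φ x : ℂ)) k
      = ∑ i, cubeFourierCoeff
          (fun x => (fderiv ℝ (fun y => fderiv ℝ φ y (b i)) x (b i) : ℂ)) k := by
        simp only [cubeFourierCoeff, lap, Complex.ofReal_sum, Finset.mul_sum]
        exact integral_finsetSum _ fun i _ => integrableOn_Qcube (hcont i)
    _ = ∑ i, (2 * π * Complex.I * ⟪latticeVec k, b i⟫) ^ 2 *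
          cubeFourierCoeff (fun x => (φ x : ℂ)) k := by
        refine Finset.sum_congr rfl fun i _ => ?_
        rw [cubeFourierCoeff_ofReal_fderiv (hφ.fderiv.comp (· (b i))) (hpartial i),
          cubeFourierCoeff_ofReal_fderiv hφ (hφd.of_le one_le_two)]
        ring
    _ = _ := by
        have hnorm : ‖latticeVec k‖ ^ 2 = ∑ i, ⟪latticeVec k, b i⟫ ^ 2 := by
          simp [b, EuclideanSpace.norm_sq_eq, EuclideanSpace.inner_single_right]
        have hnorm' : (‖latticeVec k‖ : ℂ) ^ 2 = ∑ i, (⟪latticeVec k, b i⟫ : ℂ) ^ 2 := by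
          exact_mod_cast hnorm
        rw [← Finset.sum_mul]
        simp only [mul_pow, ← Finset.mul_sum, ← hnorm', Complex.I_sq]
        ring

/-- The projection `ℝⁿ → ℝⁿ/ℤⁿ`. -/
def toTorus : C(EuclideanSpace ℝ (Fin n), UnitAddTorus (Fin n)) where
  toFun x i := (x i : UnitAddCircle)
  continuous_toFun := continuous_pi fun i =>
    (AddCircle.continuous_mk' (1 : ℝ)).comp (EuclideanSpace.proj i).continuous

lemma toTorus_apply (x : EuclideanSpace ℝ (Fin n)) (i : Fin n) :
    toTorus x i = (x i : UnitAddCircle) :=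
  rfl

lemma isQuotientMap_toTorus :
    Topology.IsQuotientMap (toTorus : C(EuclideanSpace ℝ (Fin n), UnitAddTorus (Fin n))) :=
  (IsOpenQuotientMap.piMap fun _ => QuotientAddGroup.isOpenQuotientMap_mk).isQuotientMap.comp
    (PiLp.homeomorph 2 fun _ : Fin n => ℝ).isQuotientMap

lemma exists_eq_add_latticeVec {x y : EuclideanSpace ℝ (Fin n)} (h : toTorus x = toTorus y) :
    ∃ k : Fin n → ℤ, x = y + latticeVec k := by
  have hcoord : ∀ i, ∃ k : ℤ, k • (1 : ℝ) = x i - y i := fun i => by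
    rw [← AddCircle.coe_eq_zero_iff, AddCircle.coe_sub, sub_eq_zero]
    exact congrFun h i
  choose k hk using hcoord
  refine ⟨k, ?_⟩
  ext i
  have hki := hk i
  rw [zsmul_one] at hki
  simp [latticeVec, hki]

lemma LatticePeriodic.exists_eq_comp_toTorus {X : Type*} [TopologicalSpace X]
    {f : EuclideanSpace ℝ (Fin n) → X} (hf : LatticePeriodic f) (hfc : Continuous f) :
    ∃ F : C(UnitAddTorus (Fin n), X), ∀ x, F (toTorus x) = f x := by
  have hfac : Function.FactorsThrough f toTorus := fun x y hxy => by
    obtain ⟨k, rfl⟩ := exists_eq_add_latticeVec hxy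
    exact hf k y
  exact ⟨isQuotientMap_toTorus.lift ⟨f, hfc⟩ hfac,
    DFunLike.congr_fun (isQuotientMap_toTorus.lift_comp ⟨f, hfc⟩ hfac)⟩

lemma mFourier_toTorus (k : Fin n → ℤ) (x : EuclideanSpace ℝ (Fin n)) :
    UnitAddTorus.mFourier k (toTorus x) = 𝐞 ⟪latticeVec k, x⟫ := by
  simp only [UnitAddTorus.mFourier, ContinuousMap.coe_mk, toTorus_apply, fourier_coe_apply]
  rw [← Complex.exp_sum, Real.fourierChar_apply]
  congr 1
  simp only [PiLp.inner_apply, latticeVec, RCLike.inner_apply, conj_trivial, Complex.ofReal_mul,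
    Complex.ofReal_sum, Finset.mul_sum, Finset.sum_mul, Complex.ofReal_ofNat,
    Complex.ofReal_intCast, Complex.ofReal_one, div_one]
  exact Finset.sum_congr rfl fun i _ => by ring

lemma mFourierCoeff_eq_cubeFourierCoeff {F : UnitAddTorus (Fin n) → ℂ}
    {f : EuclideanSpace ℝ (Fin n) → ℂ} (hF : ∀ x, F (toTorus x) = f x) (k : Fin n → ℤ) :
    UnitAddTorus.mFourierCoeff F k = cubeFourierCoeff f k := by
  set g : EuclideanSpace ℝ (Fin n) → ℂ := fun x => 𝐞 (-⟪latticeVec k, x⟫) * f x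
  have hneg : latticeVec (-k) = -latticeVec k := by
    ext i
    simp [latticeVec]
  have hbox : {x : Fin n → ℝ | ∀ i, x i ∈ Ioc ((0 : Fin n → ℝ) i) ((0 : Fin n → ℝ) i + 1)} =
      Set.pi univ fun _ => Ioc (0 : ℝ) 1 := by
    ext x
    simp
  have hboundary : (Set.pi univ fun _ : Fin n => Ioc (0 : ℝ) 1) =ᵐ[volume]
      Set.pi univ fun _ : Fin n => Ico (0 : ℝ) 1 :=
    Measure.univ_pi_Ioc_ae_eq_Icc.trans Measure.univ_pi_Ico_ae_eq_Icc.symm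
  calc UnitAddTorus.mFourierCoeff F k
      = ∫ x in Set.pi univ fun _ : Fin n => Ioc (0 : ℝ) 1, g (WithLp.toLp 2 x) := by
        rw [UnitAddTorus.mFourierCoeff_eq_integral F k 0, hbox]
        congr 1 with x
        simp only [g, ← hF, smul_eq_mul, ← inner_neg_left, ← hneg, ← mFourier_toTorus]
        rfl
    _ = ∫ x in WithLp.toLp 2 ⁻¹' Qcube n, g (WithLp.toLp 2 x) := by
        rw [setIntegral_congr_set hboundary, preimage_toLp_Qcube]
    _ = cubeFourierCoeff f k :=
        (PiLp.volume_preserving_toLp (Fin n)).setIntegral_preimage_emb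
          (MeasurableEquiv.toLp 2 (Fin n → ℝ)).measurableEmbedding g (Qcube n)

lemma LatticePeriodic.hasSum_cubeFourierCoeff {f : EuclideanSpace ℝ (Fin n) → ℂ}
    (hf : LatticePeriodic f) (hfc : Continuous f) (hs : Summable (cubeFourierCoeff f))
    (x : EuclideanSpace ℝ (Fin n)) :
    HasSum (fun k => cubeFourierCoeff f k * 𝐞 ⟪latticeVec k, x⟫) (f x) := by
  obtain ⟨F, hF⟩ := hf.exists_eq_comp_toTorus hfc
  have hcoeff : UnitAddTorus.mFourierCoeff F = cubeFourierCoeff f :=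
    funext (mFourierCoeff_eq_cubeFourierCoeff hF)
  have hseries :=
    UnitAddTorus.hasSum_mFourier_series_apply_of_summable (by rwa [hcoeff]) (toTorus x)
  simpa only [hcoeff, smul_eq_mul, mFourier_toTorus, hF] using hseries

lemma abs_apply_le_norm_latticeVec (k : Fin n → ℤ) (i : Fin n) : |(k i : ℝ)| ≤ ‖latticeVec k‖ :=
  PiLp.norm_apply_le (latticeVec k) i

lemma finite_setOf_norm_latticeVec_le (r : ℝ) : {k : Fin n → ℤ | ‖latticeVec k‖ ≤ r}.Finite := by
  refine Set.Finite.subset (Set.finite_Icc (fun _ => -⌈r⌉) fun _ => ⌈r⌉) fun k hk => ?_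
  have hcoord : ∀ i, |k i| ≤ ⌈r⌉ := fun i => by
    exact_mod_cast ((abs_apply_le_norm_latticeVec k i).trans hk).trans (Int.le_ceil r)
  exact ⟨fun i => (abs_le.mp (hcoord i)).1, fun i => (abs_le.mp (hcoord i)).2⟩

lemma one_le_norm_latticeVec {k : Fin n → ℤ} (hk : k ≠ 0) : 1 ≤ ‖latticeVec k‖ := by
  obtain ⟨i, hi⟩ := Function.ne_iff.mp hk
  refine le_trans ?_ (abs_apply_le_norm_latticeVec k i)
  exact_mod_cast Int.one_le_abs hi

/-- `φ` is an eigenfunction of the Laplacian of the flat torus for the eigenvalue `-lam ^ 2`. The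
zero function is allowed. -/
structure IsTorusEigenfunction (lam : ℝ) (φ : EuclideanSpace ℝ (Fin n) → ℝ) : Prop where
  contDiff : ContDiff ℝ 2 φ
  latticePeriodic : LatticePeriodic φ
  lap_eq : ∀ x, lap φ x = -lam ^ 2 * φ x

namespace IsTorusEigenfunction

variable {lam : ℝ} {φ : EuclideanSpace ℝ (Fin n) → ℝ}

lemma norm_latticeVec_eq (hφ : IsTorusEigenfunction lam φ) (hlam : 0 < lam) {k : Fin n → ℤ}
    (hk : cubeFourierCoeff (fun x => (φ x : ℂ)) k ≠ 0) : 2 * π * ‖latticeVec k‖ = lam := by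
  have hcoeff := cubeFourierCoeff_lap hφ.latticePeriodic hφ.contDiff k
  have hscale : cubeFourierCoeff (fun x => (lap φ x : ℂ)) k =
      -(lam : ℂ) ^ 2 * cubeFourierCoeff (fun x => (φ x : ℂ)) k := by
    rw [cubeFourierCoeff, cubeFourierCoeff, ← integral_const_mul]
    congr 1 with x
    rw [hφ.lap_eq]
    push_cast
    ring
  have hsq := mul_right_cancel₀ hk (hcoeff.symm.trans hscale)
  rw [neg_inj] at hsq
  exact (sq_eq_sq₀ (by positivity) hlam.le).mp (by exact_mod_cast hsq)

lemma exists_eq_sum (hφ : IsTorusEigenfunction lam φ) (hlam : 0 < lam) :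
    ∃ (S : Finset (Fin n → ℤ)) (a : (Fin n → ℤ) → ℂ),
      (∀ k ∈ S, 2 * π * ‖latticeVec k‖ = lam) ∧
        ∀ x, (φ x : ℂ) = ∑ k ∈ S, a k * 𝐞 ⟪latticeVec k, x⟫ := by
  set a := cubeFourierCoeff fun x => (φ x : ℂ)
  have hfin : a.support.Finite := (finite_setOf_norm_latticeVec_le lam).subset fun k hk => by
    have hnorm := hφ.norm_latticeVec_eq hlam hk
    have := norm_nonneg (latticeVec k)
    change ‖latticeVec k‖ ≤ lam
    nlinarith [pi_gt_three]
  refine ⟨hfin.toFinset, a, fun k hk => hφ.norm_latticeVec_eq hlam (by simpa using hk),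
    fun x => ?_⟩
  have hsupp : ∀ k ∉ hfin.toFinset, a k = 0 := by simp
  refine ((hφ.latticePeriodic.comp Complex.ofReal).hasSum_cubeFourierCoeff
    (Complex.continuous_ofReal.comp hφ.contDiff.continuous)
    (summable_of_ne_finset_zero hsupp) x).unique (hasSum_sum_of_ne_finset_zero fun k hk => ?_)
  exact mul_eq_zero_of_left (hsupp k hk) _

lemma one_le_of_ne_zero (hφ : IsTorusEigenfunction lam φ) (hlam : 0 < lam)
    {x : EuclideanSpace ℝ (Fin n)} (hx : φ x ≠ 0) : 1 ≤ lam := by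
  obtain ⟨S, a, hS, hsum⟩ := hφ.exists_eq_sum hlam
  obtain ⟨k, hk⟩ : S.Nonempty := by
    rw [Finset.nonempty_iff_ne_empty]
    rintro rfl
    exact hx (by simpa using hsum x)
  have hnorm := hS k hk
  have hk0 : k ≠ 0 := by
    rintro rfl
    have hzero : latticeVec (0 : Fin n → ℤ) = 0 := by
      ext i
      simp [latticeVec]
    rw [hzero, norm_zero, mul_zero] at hnorm
    exact hlam.ne hnorm
  nlinarith [pi_gt_three, one_le_norm_latticeVec hk0]

end IsTorusEigenfunction

lemma integral_halfSpacePoissonKernel_mul_fourierChar {V : Type*} [NormedAddCommGroup V]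
    [InnerProductSpace ℝ V] [FiniteDimensional ℝ V] [MeasurableSpace V] [BorelSpace V] {t : ℂ}
    (ht : 0 < t.re) (w x : V) :
    ∫ y, halfSpacePoissonKernel t y * 𝐞 ⟪w, x + y⟫ =
      Complex.exp (-2 * π * t * ‖w‖) * 𝐞 ⟪w, x⟫ := by
  rw [← norm_neg w, ← fourier_halfSpacePoissonKernel ht, Real.fourier_eq, ← integral_mul_const]
  congr 1 with y
  rw [inner_neg_right, neg_neg, inner_add_right, AddChar.map_add_eq_mul, Circle.coe_mul,
    Circle.smul_def, smul_eq_mul, real_inner_comm y w]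
  ring

/-- All frequencies of `φ` have the same length, so convolution with the kernel acts as a scalar. -/
lemma IsTorusEigenfunction.integral_halfSpacePoissonKernel_mul {lam : ℝ}
    {φ : EuclideanSpace ℝ (Fin n) → ℝ} (hφ : IsTorusEigenfunction lam φ) (hlam : 0 < lam) {t : ℂ}
    (ht : 0 < t.re) (x : EuclideanSpace ℝ (Fin n)) :
    ∫ y, halfSpacePoissonKernel t y * φ (x + y) = Complex.exp (-t * lam) * φ x := by
  obtain ⟨S, a, hS, hsum⟩ := hφ.exists_eq_sum hlam
  have hint : ∀ k, Integrable fun y => halfSpacePoissonKernel t y *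
      (𝐞 ⟪latticeVec k, x + y⟫ : ℂ) := fun k => by
    have := Real.continuous_fourierChar
    exact (integrable_halfSpacePoissonKernel ht).mul_bdd (c := 1)
      (Continuous.aestronglyMeasurable (by fun_prop)) (.of_forall fun y => (Circle.norm_coe _).le)
  calc ∫ y, halfSpacePoissonKernel t y * φ (x + y)
      = ∫ y, ∑ k ∈ S, a k * (halfSpacePoissonKernel t y * 𝐞 ⟪latticeVec k, x + y⟫) := by
        simp only [hsum, Finset.mul_sum, mul_left_comm]
    _ = ∑ k ∈ S, a k * (Complex.exp (-2 * π * t * ‖latticeVec k‖) * 𝐞 ⟪latticeVec k, x⟫) := by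
        rw [integral_finsetSum _ fun k _ => (hint k).const_mul _]
        simp only [integral_const_mul, integral_halfSpacePoissonKernel_mul_fourierChar ht]
    _ = ∑ k ∈ S, Complex.exp (-t * lam) * (a k * 𝐞 ⟪latticeVec k, x⟫) := by
        refine Finset.sum_congr rfl fun k hk => ?_
        rw [← hS k hk, mul_left_comm]
        push_cast
        ring_nf
    _ = Complex.exp (-t * lam) * φ x := by rw [← Finset.mul_sum, ← hsum]

end FourierExpansion

/-! ### From the kernel estimate to the `L¹` bound -/

section LowerBound

open scoped ENNReal NNReal

variable {n : ℕ}

lemma measurable_halfSpacePoissonKernel_add_mul_I (ε : ℝ) :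
    Measurable fun p : ℝ × EuclideanSpace ℝ (Fin n) =>
      halfSpacePoissonKernel ((ε : ℂ) + p.1 * Complex.I) p.2 := by
  unfold halfSpacePoissonKernel
  fun_prop

lemma exists_lintegral_lintegral_enorm_halfSpacePoissonKernel_mul_le (hn : 2 ≤ n) :
    ∃ C : ℝ≥0, ∀ ε : ℝ, 0 < ε → ε ≤ 1 → ∀ g : EuclideanSpace ℝ (Fin n) → ℝ≥0∞,
      LatticePeriodic g → Measurable g → ∀ x,
        ∫⁻ τ in Icc (1 : ℝ) 2, ∫⁻ y,
            ‖halfSpacePoissonKernel ((ε : ℂ) + τ * Complex.I) y‖ₑ * g (x + y) ≤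
          C * ENNReal.ofReal (ε ^ (-((n : ℝ) - 1) / 2)) * ∫⁻ q in Qcube n, g q := by
  obtain ⟨C₁, hC₁⟩ := lintegral_enorm_halfSpacePoissonKernel_le
    (V := EuclideanSpace ℝ (Fin n)) (by rw [finrank_euclideanSpace_fin]; omega)
  obtain ⟨C₂, hC₂⟩ := exists_lintegral_one_add_norm_rpow_neg_mul_comp_add_le
    (lt_add_one (n : ℝ))
  rw [finrank_euclideanSpace_fin] at hC₁
  refine ⟨C₁ * C₂, fun ε hε hε1 g hg hgm x => ?_⟩
  set P : ℝ → EuclideanSpace ℝ (Fin n) → ℝ≥0∞ := fun τ y =>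
    ‖halfSpacePoissonKernel ((ε : ℂ) + τ * Complex.I) y‖ₑ
  set w : EuclideanSpace ℝ (Fin n) → ℝ≥0∞ := fun y =>
    ENNReal.ofReal ((1 + ‖y‖) ^ (-((n : ℝ) + 1)))
  set A := ENNReal.ofReal (ε ^ (-((n : ℝ) - 1) / 2))
  have hP : Measurable (Function.uncurry P) :=
    (measurable_halfSpacePoissonKernel_add_mul_I ε).enorm
  have hA : A ≠ ∞ := ENNReal.ofReal_ne_top
  calc ∫⁻ τ in Icc (1 : ℝ) 2, ∫⁻ y, P τ y * g (x + y)
      = ∫⁻ y, ∫⁻ τ in Icc (1 : ℝ) 2, P τ y * g (x + y) :=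
        lintegral_lintegral_swap
          (hP.mul (hgm.comp (measurable_snd.const_add x))).aemeasurable
    _ = ∫⁻ y, (∫⁻ τ in Icc (1 : ℝ) 2, P τ y) * g (x + y) := by
        congr 1 with y
        exact lintegral_mul_const _ hP.of_uncurry_right
    _ ≤ ∫⁻ y, C₁ * A * (w y * g (x + y)) := by
        refine lintegral_mono fun y => ?_
        rw [← mul_assoc]
        gcongr
        exact hC₁ ε hε hε1 y
    _ = C₁ * A * ∫⁻ y, w y * g (x + y) :=
        lintegral_const_mul' _ _ (ENNReal.mul_ne_top ENNReal.coe_ne_top hA)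
    _ ≤ C₁ * A * (C₂ * ∫⁻ q in Qcube n, g q) := by
        gcongr
        exact hC₂ g hg hgm x
    _ = (C₁ * C₂ : ℝ≥0) * A * ∫⁻ q in Qcube n, g q := by
        push_cast
        ring

namespace IsTorusEigenfunction

variable {lam : ℝ} {φ : EuclideanSpace ℝ (Fin n) → ℝ}

lemma enorm_le_lintegral_enorm_halfSpacePoissonKernel (hφ : IsTorusEigenfunction lam φ)
    (hlam : 0 < lam) (τ : ℝ) (x : EuclideanSpace ℝ (Fin n)) :
    ‖φ x‖ₑ ≤ ENNReal.ofReal (rexp 1) *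
      ∫⁻ y, ‖halfSpacePoissonKernel ((lam⁻¹ : ℝ) + τ * Complex.I) y‖ₑ * ‖φ (x + y)‖ₑ := by
  set t : ℂ := (lam⁻¹ : ℝ) + τ * Complex.I with ht
  have htre : 0 < t.re := by simpa [ht] using hlam
  have hnorm : ‖Complex.exp (-t * lam)‖ₑ = ENNReal.ofReal (rexp (-1)) := by
    rw [← ofReal_norm, Complex.norm_exp]
    congr 2
    simp [ht, hlam.ne']
  have hreal : ∀ r : ℝ, ‖(r : ℂ)‖ₑ = ‖r‖ₑ := fun r =>
    congrArg ((↑) : ℝ≥0 → ℝ≥0∞) (Complex.nnnorm_real r)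
  have hcancel : ENNReal.ofReal (rexp 1) * ENNReal.ofReal (rexp (-1)) = 1 := by
    rw [← ENNReal.ofReal_mul (exp_pos 1).le, ← Real.exp_add]
    simp
  calc ‖φ x‖ₑ = ENNReal.ofReal (rexp 1) * ‖Complex.exp (-t * lam) * φ x‖ₑ := by
        rw [enorm_mul, hnorm, ← mul_assoc, hcancel, one_mul, hreal]
    _ ≤ ENNReal.ofReal (rexp 1) * ∫⁻ y, ‖halfSpacePoissonKernel t y * φ (x + y)‖ₑ := by
        rw [← hφ.integral_halfSpacePoissonKernel_mul hlam htre]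
        gcongr
        exact enorm_integral_le_lintegral_enorm _
    _ = _ := by simp only [enorm_mul, hreal]

end IsTorusEigenfunction

theorem exists_abs_le_rpow_mul_setIntegral_abs (hn : 2 ≤ n) :
    ∃ C : ℝ, 0 < C ∧ ∀ (lam : ℝ) (φ : EuclideanSpace ℝ (Fin n) → ℝ), 0 < lam →
      IsTorusEigenfunction lam φ → ∀ x,
        |φ x| ≤ C * lam ^ (((n : ℝ) - 1) / 2) * ∫ q in Qcube n, |φ q| := by
  obtain ⟨C, hC⟩ := exists_lintegral_lintegral_enorm_halfSpacePoissonKernel_mul_le hn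
  refine ⟨rexp 1 * (C + 1), by positivity, fun lam φ hlam hφ x => ?_⟩
  have hφc := hφ.contDiff.continuous
  rcases eq_or_ne (φ x) 0 with hx | hx
  · rw [hx, abs_zero]
    positivity
  have hL1 : ∫⁻ q in Qcube n, ‖φ q‖ₑ = ENNReal.ofReal (∫ q in Qcube n, |φ q|) :=
    (ofReal_integral_norm_eq_lintegral_enorm (integrableOn_Qcube hφc)).symm
  have hpow : lam⁻¹ ^ (-((n : ℝ) - 1) / 2) = lam ^ (((n : ℝ) - 1) / 2) := by
    rw [inv_rpow hlam.le, ← rpow_neg hlam.le, neg_div, neg_neg]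
  have hbound : ENNReal.ofReal |φ x| ≤
      ENNReal.ofReal (rexp 1 * C * lam ^ (((n : ℝ) - 1) / 2) * ∫ q in Qcube n, |φ q|) :=
    calc ENNReal.ofReal |φ x|
        = ∫⁻ _ in Icc (1 : ℝ) 2, ‖φ x‖ₑ := by
          rw [setLIntegral_const, Real.volume_Icc, Real.enorm_eq_ofReal_abs]
          norm_num
      _ ≤ ∫⁻ τ in Icc (1 : ℝ) 2, ENNReal.ofReal (rexp 1) *
            ∫⁻ y, ‖halfSpacePoissonKernel ((lam⁻¹ : ℝ) + τ * Complex.I) y‖ₑ * ‖φ (x + y)‖ₑ :=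
          lintegral_mono fun τ => hφ.enorm_le_lintegral_enorm_halfSpacePoissonKernel hlam τ x
      _ ≤ ENNReal.ofReal (rexp 1) *
            (C * ENNReal.ofReal (lam ^ (((n : ℝ) - 1) / 2)) * ∫⁻ q in Qcube n, ‖φ q‖ₑ) := by
          rw [lintegral_const_mul' _ _ ENNReal.ofReal_ne_top, ← hpow]
          gcongr
          exact hC _ (inv_pos.mpr hlam) (inv_le_one_of_one_le₀ (hφ.one_le_of_ne_zero hlam hx)) _
            (hφ.latticePeriodic.comp _) hφc.measurable.enorm x
      _ = _ := by
          rw [hL1, ← ENNReal.ofReal_coe_nnreal, ← ENNReal.ofReal_mul (by positivity),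
            ← ENNReal.ofReal_mul (by positivity), ← ENNReal.ofReal_mul (by positivity)]
          ring_nf
  refine ((ENNReal.ofReal_le_ofReal_iff (by positivity)).mp hbound).trans ?_
  gcongr
  linarith

lemma setIntegral_Qcube_sq_le {φ : EuclideanSpace ℝ (Fin n) → ℝ} (hφ : Continuous φ) {M : ℝ}
    (hM : ∀ x, |φ x| ≤ M) : ∫ x in Qcube n, φ x ^ 2 ≤ M * ∫ x in Qcube n, |φ x| := by
  rw [← integral_const_mul]
  refine setIntegral_mono (integrableOn_Qcube (hφ.pow 2))
    ((integrableOn_Qcube hφ.abs).const_mul M) fun x => ?_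
  rw [← sq_abs, sq]
  exact mul_le_mul_of_nonneg_right (hM x) (abs_nonneg _)

end LowerBound

theorem L1_lower_bound (n : ℕ) (hn : 2 ≤ n) :
    ∃ C : ℝ, 0 < C ∧
      ∀ (lam : ℝ), 0 < lam →
        ∀ (φ : EuclideanSpace ℝ (Fin n) → ℝ), ContDiff ℝ (⊤ : ℕ∞) φ → ZPeriodic φ →
          (∀ x, lap φ x = -lam ^ 2 * φ x) → (∫ x in Qcube n, (φ x) ^ 2) = 1 →
          (∫ x in Qcube n, |φ x|) ≥ C * lam ^ (-((n : ℝ) - 1) / 4) := by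
  obtain ⟨B, hB, hsup⟩ := exists_abs_le_rpow_mul_setIntegral_abs hn
  refine ⟨√B⁻¹, by positivity, fun lam hlam φ hφ hper hlap hL2 => ?_⟩
  have heig : IsTorusEigenfunction lam φ := ⟨contDiff_infty.mp hφ 2, hper.latticePeriodic, hlap⟩
  set I := ∫ x in Qcube n, |φ x|
  have hI : 0 ≤ I := integral_nonneg fun _ => abs_nonneg _
  have hone : 1 ≤ B * lam ^ (((n : ℝ) - 1) / 2) * I * I :=
    hL2.ge.trans (setIntegral_Qcube_sq_le hφ.continuous (hsup lam φ hlam heig))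
  have hpow : lam ^ (-((n : ℝ) - 1) / 4) = √(lam ^ (((n : ℝ) - 1) / 2))⁻¹ := by
    rw [sqrt_eq_rpow, ← rpow_neg hlam.le, ← rpow_mul hlam.le]
    ring_nf
  rw [ge_iff_le, hpow, ← sqrt_mul (inv_nonneg.mpr hB.le), ← mul_inv, sqrt_le_left hI,
    inv_le_iff_one_le_mul₀ (by positivity)]
  linarith
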